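/- Let v : ℝ → ℝ → ℝ be a smooth function of (x,t) with v_x(x,t) ≠ 0 for all (x,t), satisfying the 3rd potential Kupershmidt equation v_t = v_{5x} - 5·v_{xx}v_{4x}/v_x + 5·v_{xx}²v_{xxx}/v_x². Then h := v_x^{-2} satisfies h_t = ∂_x[ h_{4x} - 5·h_xh_{xxx}/h - (15/4)·h_{xx}²/h + (65/4)·h_x²h_{xx}/h² - (135/16)·h_x⁴/h³ ], where ∂_x denotes the partial derivative with respect to x of the bracketed expression. -/

import Mathlib

/-!
Write `a, b, c, d, e, f` for the successive `x`-derivatives `v_x, …, v_{6x}`. Mixed partial derivatives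
of the smooth function `v` commute (`dt_dx_comm`), so `h_t = -2 a⁻³ ∂_x(v_t)`, and the equation for `v`
turns the right-hand side into a rational expression in `a, …, f`. On the other side, the derivatives
of `h = a⁻²` are computed explicitly up to order four, and the bracket collapses to
`-2 e / a³ + 4 b d / a⁴ + 3 c² / a⁴ - 4 b² c / a⁵`, whose `x`-derivative is the same rational expression.
-/

/-- Total `x`-derivative of a function of `(x, t)`. -/
noncomputable def dx (f : ℝ → ℝ → ℝ) : ℝ → ℝ → ℝ := fun x t => deriv (fun y => f y t) x

/-- Total `t`-derivative of a function of `(x, t)`. -/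
noncomputable def dt (f : ℝ → ℝ → ℝ) : ℝ → ℝ → ℝ := fun x t => deriv (fun s => f x s) t

/-- The 3rd potential Kupershmidt equation. -/
def Kup3 (v : ℝ → ℝ → ℝ) : Prop :=
  ∀ x t, dt v x t =
    dx (dx (dx (dx (dx v)))) x t
    - 5 * dx (dx v) x t * dx (dx (dx (dx v))) x t / dx v x t
    + 5 * (dx (dx v) x t)^2 * dx (dx (dx v)) x t / (dx v x t)^2

/-- Joint smoothness of a curried function of `(x, t)`. -/
def SmoothXT (f : ℝ → ℝ → ℝ) : Prop :=
  ContDiff ℝ (⊤ : ℕ∞) (fun p : ℝ × ℝ => f p.1 p.2)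

lemma SmoothXT.hasDerivAt_x {f : ℝ → ℝ → ℝ} (hf : SmoothXT f) (x t : ℝ) :
    HasDerivAt (fun y => f y t) (dx f x t) x := by
  have hd : Differentiable ℝ (fun p : ℝ × ℝ => f p.1 p.2) := ContDiff.differentiable hf (by simp)
  have hc : Differentiable ℝ (fun y : ℝ => f y t) :=
    hd.comp (g := fun p : ℝ × ℝ => f p.1 p.2) (f := fun y : ℝ => (y, t)) (by fun_prop)
  exact (hc x).hasDerivAt

lemma SmoothXT.hasDerivAt_t {f : ℝ → ℝ → ℝ} (hf : SmoothXT f) (x t : ℝ) :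
    HasDerivAt (fun s => f x s) (dt f x t) t := by
  have hd : Differentiable ℝ (fun p : ℝ × ℝ => f p.1 p.2) := ContDiff.differentiable hf (by simp)
  have hc : Differentiable ℝ (fun s : ℝ => f x s) :=
    hd.comp (g := fun p : ℝ × ℝ => f p.1 p.2) (f := fun s : ℝ => (x, s)) (by fun_prop)
  exact (hc t).hasDerivAt

lemma SmoothXT.dx_eq_fderiv {f : ℝ → ℝ → ℝ} (hf : SmoothXT f) (x t : ℝ) :
    dx f x t = fderiv ℝ (fun p : ℝ × ℝ => f p.1 p.2) (x, t) (1, 0) := by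
  have hd : HasFDerivAt (fun p : ℝ × ℝ => f p.1 p.2) _ (x, t) :=
    (ContDiff.differentiable hf (by simp) (x, t)).hasFDerivAt
  have hl : HasDerivAt (fun y : ℝ => (y, t)) ((1 : ℝ), (0 : ℝ)) x :=
    (hasDerivAt_id x).prodMk (hasDerivAt_const x t)
  exact (hd.comp_hasDerivAt x hl).deriv

lemma SmoothXT.dt_eq_fderiv {f : ℝ → ℝ → ℝ} (hf : SmoothXT f) (x t : ℝ) :
    dt f x t = fderiv ℝ (fun p : ℝ × ℝ => f p.1 p.2) (x, t) (0, 1) := by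
  have hd : HasFDerivAt (fun p : ℝ × ℝ => f p.1 p.2) _ (x, t) :=
    (ContDiff.differentiable hf (by simp) (x, t)).hasFDerivAt
  have hl : HasDerivAt (fun s : ℝ => (x, s)) ((0 : ℝ), (1 : ℝ)) t :=
    (hasDerivAt_const t x).prodMk (hasDerivAt_id t)
  exact (hd.comp_hasDerivAt t hl).deriv

lemma SmoothXT.contDiff_fderiv {f : ℝ → ℝ → ℝ} (hf : SmoothXT f) :
    ContDiff ℝ (⊤ : ℕ∞) (fderiv ℝ (fun p : ℝ × ℝ => f p.1 p.2)) :=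
  ContDiff.fderiv_right (n := ((⊤ : ℕ∞) : WithTop ℕ∞)) hf (by simp)

lemma SmoothXT.dx {f : ℝ → ℝ → ℝ} (hf : SmoothXT f) : SmoothXT (dx f) := by
  have he : (fun p : ℝ × ℝ => _root_.dx f p.1 p.2) =
      fun p => fderiv ℝ (fun p : ℝ × ℝ => f p.1 p.2) p (1, 0) :=
    funext fun p => hf.dx_eq_fderiv p.1 p.2
  rw [SmoothXT, he]
  exact hf.contDiff_fderiv.clm_apply contDiff_const

lemma SmoothXT.dt {f : ℝ → ℝ → ℝ} (hf : SmoothXT f) : SmoothXT (dt f) := by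
  have he : (fun p : ℝ × ℝ => _root_.dt f p.1 p.2) =
      fun p => fderiv ℝ (fun p : ℝ × ℝ => f p.1 p.2) p (0, 1) :=
    funext fun p => hf.dt_eq_fderiv p.1 p.2
  rw [SmoothXT, he]
  exact hf.contDiff_fderiv.clm_apply contDiff_const

lemma SmoothXT.dt_dx_comm {f : ℝ → ℝ → ℝ} (hf : SmoothXT f) (x t : ℝ) :
    _root_.dt (_root_.dx f) x t = _root_.dx (_root_.dt f) x t := by
  have hD : DifferentiableAt ℝ (fderiv ℝ (fun p : ℝ × ℝ => f p.1 p.2)) (x, t) :=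
    hf.contDiff_fderiv.differentiable (by simp) (x, t)
  have hsymm : IsSymmSndFDerivAt ℝ (fun p : ℝ × ℝ => f p.1 p.2) (x, t) :=
    ContDiffAt.isSymmSndFDerivAt (n := ((⊤ : ℕ∞) : WithTop ℕ∞)) (ContDiff.contDiffAt hf)
      (by simpa using WithTop.coe_le_coe.2 (le_top : (2 : ℕ∞) ≤ ⊤))
  have key : ∀ u w : ℝ × ℝ,
      fderiv ℝ (fun p => fderiv ℝ (fun p : ℝ × ℝ => f p.1 p.2) p u) (x, t) w =
        fderiv ℝ (fderiv ℝ (fun p : ℝ × ℝ => f p.1 p.2)) (x, t) w u := by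
    intro u w
    rw [fderiv_clm_apply hD (differentiableAt_const u)]
    simp
  rw [hf.dx.dt_eq_fderiv, hf.dt.dx_eq_fderiv]
  have h1 : (fun p : ℝ × ℝ => _root_.dx f p.1 p.2) =
      fun p => fderiv ℝ (fun p : ℝ × ℝ => f p.1 p.2) p (1, 0) :=
    funext fun p => hf.dx_eq_fderiv p.1 p.2
  have h2 : (fun p : ℝ × ℝ => _root_.dt f p.1 p.2) =
      fun p => fderiv ℝ (fun p : ℝ × ℝ => f p.1 p.2) p (0, 1) :=
    funext fun p => hf.dt_eq_fderiv p.1 p.2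
  rw [h1, h2, key, key]
  exact hsymm _ _

/-- If `v` solves the 3rd potential Kupershmidt equation, then `h = v_x^{-2}` solves
the `x`-differentiated 2nd potential Kupershmidt equation. -/
theorem kup3_potentialisation
    (v : ℝ → ℝ → ℝ)
    (hv : ContDiff ℝ (⊤ : ℕ∞) (fun p : ℝ × ℝ => v p.1 p.2))
    (hvx : ∀ x t, dx v x t ≠ 0)
    (heq : Kup3 v)
    (h : ℝ → ℝ → ℝ)
    (hh : ∀ x t, h x t = (dx v x t) ^ (-2 : ℤ)) :
    ∀ x t, dt h x t =
      dx (fun x t =>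
        dx (dx (dx (dx h))) x t
        - 5 * dx h x t * dx (dx (dx h)) x t / h x t
        - (15/4) * (dx (dx h) x t)^2 / h x t
        + (65/4) * (dx h x t)^2 * dx (dx h) x t / (h x t)^2
        - (135/16) * (dx h x t)^4 / (h x t)^3) x t := by
  have sv : SmoothXT v := hv
  have sa : SmoothXT (dx v) := sv.dx
  obtain ⟨a, ha⟩ : ∃ a, a = dx v := ⟨_, rfl⟩
  obtain ⟨b, hb⟩ : ∃ b, b = dx a := ⟨_, rfl⟩
  obtain ⟨c, hc⟩ : ∃ c, c = dx b := ⟨_, rfl⟩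
  obtain ⟨d, hd⟩ : ∃ d, d = dx c := ⟨_, rfl⟩
  obtain ⟨e, he⟩ : ∃ e, e = dx d := ⟨_, rfl⟩
  obtain ⟨f, hf⟩ : ∃ f, f = dx e := ⟨_, rfl⟩
  rw [← ha] at sa hvx hh
  have sb : SmoothXT b := hb ▸ sa.dx
  have sc : SmoothXT c := hc ▸ sb.dx
  have sd : SmoothXT d := hd ▸ sc.dx
  have se : SmoothXT e := he ▸ sd.dx
  have da : ∀ x t, HasDerivAt (fun y => a y t) (b x t) x := hb ▸ sa.hasDerivAt_x
  have db : ∀ x t, HasDerivAt (fun y => b y t) (c x t) x := hc ▸ sb.hasDerivAt_x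
  have dc : ∀ x t, HasDerivAt (fun y => c y t) (d x t) x := hd ▸ sc.hasDerivAt_x
  have dd : ∀ x t, HasDerivAt (fun y => d y t) (e x t) x := he ▸ sd.hasDerivAt_x
  have de : ∀ x t, HasDerivAt (fun y => e y t) (f x t) x := hf ▸ se.hasDerivAt_x
  have hvt : dt v = fun x t => e x t - 5 * b x t * d x t / a x t
      + 5 * (b x t) ^ 2 * c x t / (a x t) ^ 2 := by
    funext x t
    rw [heq x t, he, hd, hc, hb, ha]
  -- The `t`-derivative of `v_x`, by commuting the mixed partials.
  have hat : ∀ x t, dt a x t = f x t + 10 * b x t ^ 2 * d x t / a x t ^ 2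
      - 5 * c x t * d x t / a x t - 5 * b x t * e x t / a x t
      - 10 * b x t ^ 3 * c x t / a x t ^ 3 + 10 * b x t * c x t ^ 2 / a x t ^ 2 := by
    intro x t
    have h0 := hvx x t
    have hcomm : dt a x t = dx (dt v) x t := by rw [ha, sv.dt_dx_comm]
    rw [hcomm, hvt]
    have H := ((de x t).sub ((((db x t).const_mul 5).mul (dd x t)).div (da x t) h0)).add
      (((((db x t).pow 2).const_mul 5).mul (dc x t)).div ((da x t).pow 2) (pow_ne_zero 2 h0))
    refine (H.congr_deriv ?_).deriv
    simp only [Pi.mul_apply, Pi.pow_apply]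
    field_simp
    ring
  have hh0 : h = fun x t => 1 / a x t ^ 2 := by
    funext x t
    rw [hh x t, zpow_neg, one_div]
    rfl
  have hh1 : dx h = fun x t => -2 * b x t / a x t ^ 3 := by
    funext x t
    have h0 := hvx x t
    rw [hh0]
    have H := (hasDerivAt_const x (1 : ℝ)).div ((da x t).pow 2) (pow_ne_zero 2 h0)
    refine (H.congr_deriv ?_).deriv
    simp only [Pi.pow_apply]
    field_simp
    ring
  have hh2 : dx (dx h) = fun x t => (6 * b x t ^ 2 - 2 * a x t * c x t) / a x t ^ 4 := by
    funext x t
    have h0 := hvx x t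
    rw [hh1]
    have H := ((db x t).const_mul (-2)).div ((da x t).pow 3) (pow_ne_zero 3 h0)
    refine (H.congr_deriv ?_).deriv
    simp only [Pi.pow_apply]
    field_simp
    ring
  have hh3 : dx (dx (dx h)) = fun x t =>
      (-24 * b x t ^ 3 + 18 * a x t * b x t * c x t - 2 * a x t ^ 2 * d x t) / a x t ^ 5 := by
    funext x t
    have h0 := hvx x t
    rw [hh2]
    have H := ((((db x t).pow 2).const_mul 6).sub (((da x t).const_mul 2).mul (dc x t))).div
      ((da x t).pow 4) (pow_ne_zero 4 h0)
    refine (H.congr_deriv ?_).deriv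
    simp only [Pi.pow_apply, Pi.sub_apply, Pi.mul_apply]
    field_simp
    ring
  have hh4 : dx (dx (dx (dx h))) = fun x t =>
      (120 * b x t ^ 4 - 144 * a x t * b x t ^ 2 * c x t + 18 * a x t ^ 2 * c x t ^ 2
        + 24 * a x t ^ 2 * b x t * d x t - 2 * a x t ^ 3 * e x t) / a x t ^ 6 := by
    funext x t
    have h0 := hvx x t
    rw [hh3]
    have H := (((((db x t).pow 3).const_mul (-24)).add
      ((((da x t).const_mul 18).mul (db x t)).mul (dc x t))).sub
      ((((da x t).pow 2).const_mul 2).mul (dd x t))).div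
      ((da x t).pow 5) (pow_ne_zero 5 h0)
    refine (H.congr_deriv ?_).deriv
    simp only [Pi.pow_apply, Pi.sub_apply, Pi.add_apply, Pi.mul_apply]
    field_simp
    ring
  have hB : (fun x t =>
        dx (dx (dx (dx h))) x t
        - 5 * dx h x t * dx (dx (dx h)) x t / h x t
        - (15/4) * (dx (dx h) x t)^2 / h x t
        + (65/4) * (dx h x t)^2 * dx (dx h) x t / (h x t)^2
        - (135/16) * (dx h x t)^4 / (h x t)^3) = fun x t =>
      (-4 * b x t ^ 2 * c x t + 3 * a x t * c x t ^ 2 + 4 * a x t * b x t * d x t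
        - 2 * a x t ^ 2 * e x t) / a x t ^ 5 := by
    funext x t
    have h0 := hvx x t
    rw [hh4, hh3, hh2, hh1, hh0]
    field_simp
    ring
  intro x t
  have h0 := hvx x t
  rw [hB]
  have HL := (hasDerivAt_const t (1 : ℝ)).div ((sa.hasDerivAt_t x t).pow 2) (pow_ne_zero 2 h0)
  have HR := (((((((db x t).pow 2).const_mul (-4)).mul (dc x t)).add
      (((da x t).const_mul 3).mul ((dc x t).pow 2))).add
      ((((da x t).const_mul 4).mul (db x t)).mul (dd x t))).sub
      ((((da x t).pow 2).const_mul 2).mul (de x t))).div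
      ((da x t).pow 5) (pow_ne_zero 5 h0)
  have hL : dt h x t = -2 * dt a x t / a x t ^ 3 := by
    rw [hh0]
    refine (HL.congr_deriv ?_).deriv
    simp only [Pi.pow_apply]
    field_simp
    ring
  rw [hL, hat x t]
  refine Eq.symm ((HR.congr_deriv ?_).deriv)
  simp only [Pi.pow_apply, Pi.sub_apply, Pi.add_apply, Pi.mul_apply]
  field_simp
  ring
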